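/- arXiv:1205.6256 — 4 statements merged into one kernel-verified Lean document; each statement's English description precedes it below -/
import Mathlib

section
/- Let L be a finite upper locally distributive lattice, let a ⋖ b be a cover in L and let m = 𝔪(a,b). Then for every chain of covers a = x₁ ⋖ x₂ ⋖ ⋯ ⋖ x_k = m in L there exists a chain of covers b = y₁ ⋖ y₂ ⋖ ⋯ ⋖ y_k = m⁺ in L such that x_i ⋖ y_i for every 1 ≤ i ≤ k, and moreover 𝔪(x_i, y_i) = m for every 1 ≤ i ≤ k. -/
open Classical

section CFGdefs

variable {V : Type*}

/-- Out-degree of a vertex in a directed multigraph with edge multiplicities `E`. -/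
noncomputable def outDeg (E : V → V → ℕ) (v : V) : ℕ := ∑ᶠ u, E v u

/-- A vertex is a sink if all its outgoing edges are loops. -/
def IsSink (E : V → V → ℕ) (v : V) : Prop := outDeg E v = E v v

/-- A vertex is firable in configuration `c`. -/
def Firable (E : V → V → ℕ) (c : V → ℕ) (v : V) : Prop :=
  ¬ IsSink E v ∧ outDeg E v ≤ c v

/-- The result of firing vertex `v` in configuration `c`. -/
noncomputable def fire (E : V → V → ℕ) (c : V → ℕ) (v : V) : V → ℕ :=
  fun u => if u = v then c v - outDeg E v + E v v else c u + E v u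

/-- The configuration obtained by firing a list of vertices in order. -/
noncomputable def fireList (E : V → V → ℕ) : (V → ℕ) → List V → (V → ℕ)
  | c, [] => c
  | c, v :: l => fireList E (fire E c v) l

/-- A list of vertices is a valid firing sequence from `c`. -/
def ValidSeq (E : V → V → ℕ) : (V → ℕ) → List V → Prop
  | _, [] => True
  | c, v :: l => Firable E c v ∧ ValidSeq E (fire E c v) l

/-- `c'` is reachable from `c` by a finite sequence of firings. -/
def Reaches (E : V → V → ℕ) (c c' : V → ℕ) : Prop :=
  ∃ l : List V, ValidSeq E c l ∧ fireList E c l = c'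

/-- A configuration with no firable vertex. -/
def FixedPt (E : V → V → ℕ) (c : V → ℕ) : Prop := ∀ v, ¬ Firable E c v

/-- The chip firing game `CFG(G,O)` reaches a unique fixed point. -/
def ReachesUFP (E : V → V → ℕ) (O : V → ℕ) : Prop :=
  ∃ fp : V → ℕ, Reaches E O fp ∧ FixedPt E fp ∧ ∀ c, Reaches E O c → Reaches E c fp

/-- The game is simple: in every firing sequence from `O` to the fixed point,
each vertex fires at most once. -/
def SimpleCFG (E : V → V → ℕ) (O : V → ℕ) : Prop :=
  ∀ l : List V, ValidSeq E O l → FixedPt E (fireList E O l) → l.Nodup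

/-- Single firing step from `c` to `c'` by firing vertex `v`. -/
def FireStep (E : V → V → ℕ) (c : V → ℕ) (v : V) (c' : V → ℕ) : Prop :=
  Firable E c v ∧ fire E c v = c'

/-- The partial order `L` is order-isomorphic to the configuration space of
`CFG(G,O)` ordered by reachability. -/
def Generates (E : V → V → ℕ) (O : V → ℕ) (L : Type*) [PartialOrder L] : Prop :=
  ∃ f : L ≃ {c : V → ℕ // Reaches E O c},
    ∀ a b : L, a ≤ b ↔ Reaches E (f a).val (f b).val

/-- The support graph is connected (as an undirected graph). -/
def ConnectedG (E : V → V → ℕ) : Prop :=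
  ∀ u v : V, Relation.ReflTransGen (fun a b => 0 < E a b ∨ 0 < E b a) u v

/-- The support graph together with its initial data is an Abelian Sandpile Model. -/
def IsASM (E : V → V → ℕ) : Prop :=
  ConnectedG E ∧ ∃ s : V, IsSink E s ∧ (∀ v, IsSink E v → v = s) ∧
    ∀ v₁ v₂ : V, v₁ ≠ v₂ → v₁ ≠ s → v₂ ≠ s → E v₁ v₂ = E v₂ v₁

/-- The directed multigraph has no directed cycle. -/
def AcyclicG (E : V → V → ℕ) : Prop :=
  ∀ v : V, ¬ Relation.TransGen (fun a b => 0 < E a b) v v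

end CFGdefs

/-- `L` is generated by some chip firing game reaching a unique fixed point. -/
def MemLCFG (L : Type*) [PartialOrder L] : Prop :=
  ∃ (V : Type) (_ : Finite V) (E : V → V → ℕ) (O : V → ℕ),
    ReachesUFP E O ∧ Generates E O L

/-- `L` is generated by some Abelian Sandpile Model reaching a unique fixed point. -/
def MemLASM (L : Type*) [PartialOrder L] : Prop :=
  ∃ (V : Type) (_ : Finite V) (E : V → V → ℕ) (O : V → ℕ),
    IsASM E ∧ ReachesUFP E O ∧ Generates E O L

section Latticedefs

variable {L : Type*} [Lattice L]

/-- `m` is meet-irreducible: it has exactly one upper cover. -/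
def MeetIrred (m : L) : Prop := ∃! y, m ⋖ y

/-- `j` is join-irreducible: it has exactly one lower cover. -/
def JoinIrred (j : L) : Prop := ∃! y, y ⋖ j

/-- The set `M_x \ M_y` of meet-irreducibles above `x` but not above `y`. -/
def MsetDiff (x y : L) : Set L := {m | MeetIrred m ∧ x ≤ m ∧ ¬ y ≤ m}

/-- The set `M \ M_a` of meet-irreducibles not above `a`. -/
def MnotAbove (a : L) : Set L := {m | MeetIrred m ∧ ¬ a ≤ m}

/-- `x⁺`: the join of all upper covers of `x`. -/
noncomputable def uplus [Fintype L] [OrderBot L] (x : L) : L :=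
  Finset.univ.sup (fun y => if x ⋖ y then y else ⊥)

/-- `L` is upper locally distributive: for every `x ≠ ⊤` the interval `[x, x⁺]`
is isomorphic to a Boolean lattice (a hypercube). -/
def IsULD (L : Type*) [Lattice L] [Fintype L] [BoundedOrder L] : Prop :=
  ∀ x : L, x ≠ ⊤ → ∃ n : ℕ, Nonempty (↥(Set.Icc x (uplus x)) ≃o Set (Fin n))

/-- `𝔘_m`: the minimal elements of `{x : ∃ y, x ⋖ y and 𝔪(x,y) = m}`. -/
def Uset (m : L) : Set L :=
  {x | Minimal (fun z => ∃ y, z ⋖ y ∧ MsetDiff z y = {m}) x}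

/-- `𝔏_m`: the maximal elements of `{x : a ≰ x for every a ∈ 𝔘_m}`. -/
def Lset (m : L) : Set L :=
  {x | Maximal (fun z => ∀ a ∈ Uset m, ¬ a ≤ z) x}

/-- `(w, e)` is a (non-negative integer) solution of the system `E(m)`. -/
def SolvesE [OrderBot L] (m : L) (w : ℕ) (e : L → ℕ) : Prop :=
  (Uset m = {(⊥ : L)} → 1 ≤ w) ∧
  (Uset m ≠ {(⊥ : L)} →
    (∀ a ∈ Lset m, (∑ᶠ x ∈ MnotAbove a, e x) < w) ∧
    (∀ a ∈ Uset m, w ≤ ∑ᶠ x ∈ MnotAbove a, e x))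

/-- The system `E(m)` has a non-negative integer solution. -/
def HasSolE [OrderBot L] (m : L) : Prop := ∃ w e, SolvesE m w e

/-- The variable `e_{x,m}` occurs in the system `𝔈(m)`. -/
def VarOccurs [OrderBot L] (x m : L) : Prop :=
  MeetIrred m ∧ Uset m ≠ {(⊥ : L)} ∧ ∃ a ∈ Uset m ∪ Lset m, x ∈ MnotAbove a

/-- `(W, Ee)` is a non-negative integer solution of the system `Ω`. -/
def SolvesOmega [OrderBot L] (W : L → ℕ) (Ee : L → L → ℕ) : Prop :=
  (∀ m : L, MeetIrred m → SolvesE m (W m) (fun x => Ee x m)) ∧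
  (∀ m₁ m₂ : L, m₁ ≠ m₂ → VarOccurs m₁ m₂ → VarOccurs m₂ m₁ → Ee m₁ m₂ = Ee m₂ m₁)

/-- The edge relation of the directed graph `𝒢` on the meet-irreducibles. -/
def Gedge (m₁ m₂ : L) : Prop :=
  MeetIrred m₁ ∧ MeetIrred m₂ ∧ ∃ a ∈ Uset m₂, m₁ ∈ MnotAbove a

end Latticedefs

/-- The system `Ω` has a non-negative integer solution. -/
def HasSolOmega (L : Type*) [Lattice L] [OrderBot L] : Prop :=
  ∃ W Ee, SolvesOmega (L := L) W Ee

/-- The directed graph `𝒢` on the meet-irreducibles is acyclic. -/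
def GAcyclic (L : Type*) [Lattice L] : Prop :=
  ∀ m : L, ¬ Relation.TransGen (Gedge (L := L)) m m

/-!
In an upper locally distributive lattice the covers of `x` all lie in the Boolean interval
`[x, x⁺]`, so the lattice is upper semimodular. The lifted chain is `y i = x i ⊔ b`: since
`b ≰ m`, no `x i` lies above `b`, so semimodularity transports the cover `a ⋖ b` along the chain
`x` one step at a time. A meet-irreducible that separates `x i` from `x i ⊔ b` already separates
`a` from `b`, so the label cannot change, and `x k = m` has no upper cover other than `m⁺`.
-/

section WeakUpperModular

variable {α : Type*} [Lattice α]

theorem covBy_coe_Icc_iff {s t : α} {u v : Set.Icc s t} : (u : α) ⋖ v ↔ u ⋖ v :=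
  Set.OrdConnected.apply_covBy_apply_iff (OrderEmbedding.subtype (· ∈ Set.Icc s t)) <| by
    simpa only [OrderEmbedding.coe_subtype, Subtype.range_coe] using Set.ordConnected_Icc

theorem isWeakUpperModularLattice_of_orderIso {β : Type*} [Lattice β]
    [IsWeakUpperModularLattice β] (e : α ≃o β) : IsWeakUpperModularLattice α where
  covBy_sup_of_inf_covBy_covBy hp hq := by
    rw [← apply_covBy_apply_iff e, map_inf] at hp hq
    rw [← apply_covBy_apply_iff e, map_sup]
    exact covBy_sup_of_inf_covBy_of_inf_covBy_left hp hq

theorem isWeakUpperModularLattice_of_Icc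
    (h : ∀ p q : α, p ⊓ q ⋖ p → p ⊓ q ⋖ q →
      ∃ t, p ≤ t ∧ q ≤ t ∧ IsWeakUpperModularLattice (Set.Icc (p ⊓ q) t)) :
    IsWeakUpperModularLattice α where
  covBy_sup_of_inf_covBy_covBy {p q} hp hq := by
    obtain ⟨t, hpt, hqt, _⟩ := h p q hp hq
    let P : Set.Icc (p ⊓ q) t := ⟨p, inf_le_left, hpt⟩
    let Q : Set.Icc (p ⊓ q) t := ⟨q, inf_le_right, hqt⟩
    have hP : P ⊓ Q ⋖ P := covBy_coe_Icc_iff.1 hp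
    have hQ : P ⊓ Q ⋖ Q := covBy_coe_Icc_iff.1 hq
    exact covBy_coe_Icc_iff.2 (covBy_sup_of_inf_covBy_of_inf_covBy_left hP hQ)

variable [IsWeakUpperModularLattice α]

theorem covBy_sup_of_covBy_of_covBy_of_ne {x p q : α} (hp : x ⋖ p) (hq : x ⋖ q) (hpq : p ≠ q) :
    p ⋖ p ⊔ q := by
  have hinf : p ⊓ q = x := hp.wcovBy.inf_eq hq.wcovBy hpq
  exact covBy_sup_of_inf_covBy_of_inf_covBy_left (by rwa [hinf]) (by rwa [hinf])

theorem covBy_sup_of_covBy_sup_of_not_le {x x' b : α} (hx : x ⋖ x') (hxb : x ⋖ x ⊔ b)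
    (hb : ¬ b ≤ x') : x' ⋖ x' ⊔ b := by
  have hne : x' ≠ x ⊔ b := fun h => hb (h ▸ le_sup_right)
  simpa only [← sup_assoc, sup_eq_left.2 hx.le] using
    covBy_sup_of_covBy_of_covBy_of_ne hx hxb hne

theorem sup_covBy_sup_of_covBy_sup_of_not_le {x x' b : α} (hx : x ⋖ x') (hxb : x ⋖ x ⊔ b)
    (hb : ¬ b ≤ x') : x ⊔ b ⋖ x' ⊔ b := by
  have hne : x ⊔ b ≠ x' := fun h => hb (h ▸ le_sup_right)
  simpa only [sup_right_comm x b x', sup_eq_right.2 hx.le] using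
    covBy_sup_of_covBy_of_covBy_of_ne hxb hx hne

theorem covBy_sup_of_reflTransGen_covBy {a b x : α} (hab : a ⋖ b)
    (hax : Relation.ReflTransGen (· ⋖ ·) a x) (hb : ¬ b ≤ x) : x ⋖ x ⊔ b := by
  induction hax with
  | refl => rwa [sup_eq_right.2 hab.le]
  | tail _ hx ih =>
    exact covBy_sup_of_covBy_sup_of_not_le hx (ih fun h => hb (h.trans hx.le)) hb

end WeakUpperModular

section Chain

variable {α : Type*} [PartialOrder α]

theorem le_of_reflTransGen_covBy {a b : α} (h : Relation.ReflTransGen (· ⋖ ·) a b) : a ≤ b :=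
  Relation.reflTransGen_le_of_le (fun _ _ hab => hab.le) a b h

theorem reflTransGen_covBy_of_chain {x : ℕ → α} {l n i j : ℕ}
    (hx : ∀ i, l ≤ i → i < n → x i ⋖ x (i + 1)) (hli : l ≤ i) (hij : i ≤ j) (hjn : j ≤ n) :
    Relation.ReflTransGen (· ⋖ ·) (x i) (x j) :=
  (reflTransGen_of_succ_of_le (fun i j => x i ⋖ x j)
    (fun r hr => hx r (hli.trans hr.1) (hr.2.trans_le hjn)) hij).lift x fun _ _ h => h

end Chain

section Labels

variable {L : Type*} [Lattice L]

theorem msetDiff_sup_right {a x : L} (b : L) (hax : a ≤ x) :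
    MsetDiff x (x ⊔ b) = MsetDiff a b ∩ Set.Ici x := by
  ext n
  simp only [MsetDiff, Set.mem_ofPred_eq, Set.mem_inter_iff, Set.mem_Ici, sup_le_iff]
  have : x ≤ n → a ≤ n := hax.trans
  tauto

theorem msetDiff_sup_right_eq_singleton {a b x m : L} (hax : a ≤ x) (hxm : x ≤ m)
    (hm : MsetDiff a b = {m}) : MsetDiff x (x ⊔ b) = {m} := by
  rw [msetDiff_sup_right b hax, hm]
  exact Set.inter_eq_left.2 (Set.singleton_subset_iff.2 hxm)

end Labels

section UpperCovers

variable {L : Type*} [Lattice L] [Fintype L]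

theorem le_uplus_of_covBy [OrderBot L] {x y : L} (h : x ⋖ y) : y ≤ uplus x := by
  simpa only [uplus, if_pos h] using
    Finset.le_sup (f := fun z => if x ⋖ z then z else ⊥) (Finset.mem_univ y)

theorem MeetIrred.covBy_uplus [OrderBot L] {m : L} (hm : MeetIrred m) : m ⋖ uplus m := by
  obtain ⟨c, hc, hunique⟩ := hm
  have hle : uplus m ≤ c := Finset.sup_le fun z _ => by
    split_ifs with hz
    · exact (hunique z hz).le
    · exact bot_le
  rwa [hle.antisymm (le_uplus_of_covBy hc)]

theorem IsULD.isWeakUpperModularLattice [BoundedOrder L] (hL : IsULD L) :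
    IsWeakUpperModularLattice L :=
  isWeakUpperModularLattice_of_Icc fun p q hp hq => by
    obtain ⟨n, ⟨e⟩⟩ := hL (p ⊓ q) hp.lt.ne_top
    exact ⟨uplus (p ⊓ q), le_uplus_of_covBy hp, le_uplus_of_covBy hq,
      isWeakUpperModularLattice_of_orderIso e⟩

end UpperCovers

theorem stmt0_general {L : Type*} [Lattice L] [IsWeakUpperModularLattice L]
    (a b m c : L) (hab : a ⋖ b) (hm : MsetDiff a b = {m}) (hc : m ⋖ c)
    (k : ℕ) (hk : 1 ≤ k) (x : ℕ → L) (hx1 : x 1 = a) (hxk : x k = m)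
    (hchain : ∀ i, 1 ≤ i → i < k → x i ⋖ x (i + 1)) :
    ∃ y : ℕ → L, y 1 = b ∧ y k = c ∧
      (∀ i, 1 ≤ i → i < k → y i ⋖ y (i + 1)) ∧
      (∀ i, 1 ≤ i → i ≤ k → x i ⋖ y i ∧ MsetDiff (x i) (y i) = {m}) := by
  obtain ⟨hirr, -, hbm⟩ : m ∈ MsetDiff a b := hm.ge rfl
  have hax (i) (hi : 1 ≤ i) (hik : i ≤ k) : Relation.ReflTransGen (· ⋖ ·) a (x i) :=
    hx1 ▸ reflTransGen_covBy_of_chain hchain le_rfl hi hik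
  have hxm (i) (hi : 1 ≤ i) (hik : i ≤ k) : x i ≤ m :=
    hxk ▸ le_of_reflTransGen_covBy (reflTransGen_covBy_of_chain hchain hi hik le_rfl)
  have hb (i) (hi : 1 ≤ i) (hik : i ≤ k) : ¬ b ≤ x i := fun h => hbm (h.trans (hxm i hi hik))
  have hcov (i) (hi : 1 ≤ i) (hik : i ≤ k) : x i ⋖ x i ⊔ b :=
    covBy_sup_of_reflTransGen_covBy hab (hax i hi hik) (hb i hi hik)
  have hend : m ⋖ x k ⊔ b := by simpa only [hxk] using hcov k hk le_rfl
  refine ⟨fun i => x i ⊔ b, by simp only [hx1, sup_eq_right.2 hab.le], hirr.unique hend hc,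
    fun i hi hik => ?_, fun i hi hik => ⟨hcov i hi hik, ?_⟩⟩
  · exact sup_covBy_sup_of_covBy_sup_of_not_le (hchain i hi hik) (hcov i hi hik.le)
      (hb (i + 1) i.succ_pos hik)
  · exact msetDiff_sup_right_eq_singleton (le_of_reflTransGen_covBy (hax i hi hik))
      (hxm i hi hik) hm

/-- In a finite ULD lattice, given a cover `a ⋖ b` with `𝔪(a,b) = m`,
every chain of covers from `a` to `m` lifts to a chain of covers from `b` to `m⁺`,
with `x_i ⋖ y_i` and `𝔪(x_i, y_i) = m` throughout. -/
theorem stmt0 {L : Type*} [Lattice L] [Fintype L] [BoundedOrder L]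
    (hULD : IsULD L) (a b m : L) (hab : a ⋖ b) (hm : MsetDiff a b = {m})
    (k : ℕ) (hk : 1 ≤ k) (x : ℕ → L) (hx1 : x 1 = a) (hxk : x k = m)
    (hchain : ∀ i, 1 ≤ i → i < k → x i ⋖ x (i + 1)) :
    ∃ y : ℕ → L, y 1 = b ∧ y k = uplus m ∧
      (∀ i, 1 ≤ i → i < k → y i ⋖ y (i + 1)) ∧
      (∀ i, 1 ≤ i → i ≤ k → x i ⋖ y i ∧ MsetDiff (x i) (y i) = {m}) := by
  have := hULD.isWeakUpperModularLattice
  exact stmt0_general a b m _ hab hm (hm.ge rfl).1.covBy_uplus k hk x hx1 hxk hchain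
end

section
/- Let CFG(G,O) be a simple chip firing game reaching a unique fixed point, so that its configuration space L = CFG(G,O) is a finite ULD lattice, and let 𝒱 be the set of vertices of G fired in any firing sequence from O to the fixed point. Then the map κ : M → 𝒱 defined by κ(m) = ϑ(c,c'), where c ⋖ c' is any cover of configurations with 𝔪(c,c') = m and ϑ(c,c') is the vertex fired to pass from c to c', is well-defined (independent of the chosen cover) and is a bijection from M onto 𝒱. -/
open Classical

/-!
Firings of distinct vertices commute, so after one valid firing sequence what is left of another one
is still valid. Hence in a simple game a configuration is determined by the set of vertices fired to
reach it, and these sets form an antimatroid: they are closed under unions, and a strict inclusion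
can be entered by adding a single vertex.

In an antimatroid there is, for every vertex `v`, a largest set avoiding `v`. Its only upper cover
adds `v`, so it is meet-irreducible, and every meet-irreducible arises in this way from exactly one
vertex. If a cover `a ⋖ c` adds `v`, then the only meet-irreducible above `a` but not above `c` is
the largest set avoiding `v`. So `κ` is the inverse of the map sending `v` to the largest set
avoiding it.
-/

section FiringSequences

variable {V : Type*} {E : V → V → ℕ} {c : V → ℕ} {v w : V} {l l₁ l₂ : List V}

theorem fireList_append (c : V → ℕ) (l₁ l₂ : List V) :
    fireList E c (l₁ ++ l₂) = fireList E (fireList E c l₁) l₂ := by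
  induction l₁ generalizing c with
  | nil => rfl
  | cons _ _ ih => exact ih _

theorem validSeq_append :
    ValidSeq E c (l₁ ++ l₂) ↔ ValidSeq E c l₁ ∧ ValidSeq E (fireList E c l₁) l₂ := by
  induction l₁ generalizing c with
  | nil => simp [ValidSeq, fireList]
  | cons v l ih => simp [ValidSeq, fireList, ih, and_assoc]

theorem Firable.fire_of_ne (hw : Firable E c w) (h : w ≠ v) : Firable E (fire E c v) w :=
  ⟨hw.1, by simpa [fire, h] using le_add_right hw.2⟩

theorem fire_comm (hv : Firable E c v) (hw : Firable E c w) (h : w ≠ v) :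
    fire E (fire E c v) w = fire E (fire E c w) v := by
  have hcv := hv.2
  have hcw := hw.2
  funext u
  obtain rfl | huv := eq_or_ne u v
  · simp only [fire, if_neg h.symm, if_true]
    omega
  obtain rfl | huw := eq_or_ne u w
  · simp only [fire, if_neg h, if_true]
    omega
  · simp only [fire, if_neg huv, if_neg huw]
    omega

theorem ValidSeq.erase (hl : ValidSeq E c l) (hv : Firable E c v) :
    ValidSeq E (fire E c v) (l.erase v) := by
  induction l generalizing c with
  | nil => trivial
  | cons w l ih =>
    obtain rfl | h := eq_or_ne w v
    · simpa using hl.2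
    · rw [List.erase_cons_tail (by simpa using h)]
      refine ⟨hl.1.fire_of_ne h, ?_⟩
      rw [fire_comm hv hl.1 h]
      exact ih hl.2 (hv.fire_of_ne h.symm)

theorem fireList_erase (hl : ValidSeq E c l) (hv : Firable E c v) (hvl : v ∈ l) :
    fireList E (fire E c v) (l.erase v) = fireList E c l := by
  induction l generalizing c with
  | nil => exact absurd hvl List.not_mem_nil
  | cons w l ih =>
    obtain rfl | h := eq_or_ne w v
    · simp [fireList]
    · rw [List.erase_cons_tail (by simpa using h)]
      simp only [fireList]
      rw [fire_comm hv hl.1 h]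
      exact ih hl.2 (hv.fire_of_ne h.symm) (List.mem_of_ne_of_mem h.symm hvl)

theorem ValidSeq.diff (h₂ : ValidSeq E c l₂) (h₁ : ValidSeq E c l₁) :
    ValidSeq E (fireList E c l₁) (l₂.diff l₁) := by
  induction l₁ generalizing c l₂ with
  | nil => simpa [fireList] using h₂
  | cons v l ih =>
    rw [List.diff_cons]
    exact ih (h₂.erase h₁.1) h₁.2

theorem fireList_diff (h₂ : ValidSeq E c l₂) (h₁ : ValidSeq E c l₁) (h : l₁.Subperm l₂) :
    fireList E (fireList E c l₁) (l₂.diff l₁) = fireList E c l₂ := by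
  induction l₁ generalizing c l₂ with
  | nil => simp [fireList]
  | cons v l ih =>
    rw [List.diff_cons, ← fireList_erase h₂ h₁.1 (h.subset List.mem_cons_self)]
    exact ih (h₂.erase h₁.1) h₁.2 (by simpa using h.erase v)

theorem FixedPt.eq_nil (hc : FixedPt E c) (hl : ValidSeq E c l) : l = [] := by
  cases l with
  | nil => rfl
  | cons v l => exact absurd hl.1 (hc v)

theorem FixedPt.eq_of_reaches {d : V → ℕ} (hc : FixedPt E c) (h : Reaches E c d) : c = d := by
  obtain ⟨l, hl, rfl⟩ := h
  rw [hc.eq_nil hl, fireList]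

theorem ValidSeq.subperm_of_fixedPt (h₂ : ValidSeq E c l₂) (h₁ : ValidSeq E c l₁)
    (hfix : FixedPt E (fireList E c l₁)) : l₂.Subperm l₁ := by
  have h : l₂.Subperm (l₁ ++ l₂.diff l₁) := by
    rw [List.subperm_ext_iff]
    intro x _
    rw [List.count_append, List.count_diff]
    omega
  rwa [hfix.eq_nil (h₂.diff h₁), List.append_nil] at h

theorem Reaches.fire {O : V → ℕ} (hc : Reaches E O c) (hv : Firable E c v) :
    Reaches E O (fire E c v) := by
  obtain ⟨l, hl, rfl⟩ := hc
  exact ⟨l ++ [v], validSeq_append.2 ⟨hl, hv, trivial⟩, fireList_append O l [v]⟩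

end FiringSequences

section UniqueFixedPoint

variable {V : Type*} {E : V → V → ℕ} {O c d : V → ℕ} {v : V} {l l₁ l₂ : List V}

/-- The set of vertices fired in order to reach the configuration `c` from `O`, over all valid
firing sequences; it is empty if `c` is not reachable. -/
def firedSet (E : V → V → ℕ) (O c : V → ℕ) : Set V :=
  {v | ∃ l : List V, ValidSeq E O l ∧ fireList E O l = c ∧ v ∈ l}

theorem ReachesUFP.exists_validSeq_append_fixedPt (hUFP : ReachesUFP E O) (hl : ValidSeq E O l) :
    ∃ s, ValidSeq E O (l ++ s) ∧ FixedPt E (fireList E O (l ++ s)) := by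
  obtain ⟨fp, -, hfix, h⟩ := hUFP
  obtain ⟨s, hs, rfl⟩ := h _ ⟨l, hl, rfl⟩
  exact ⟨s, validSeq_append.2 ⟨hl, hs⟩, by rwa [fireList_append]⟩

theorem ReachesUFP.perm (hUFP : ReachesUFP E O) (h₁ : ValidSeq E O l₁) (h₂ : ValidSeq E O l₂)
    (h : fireList E O l₁ = fireList E O l₂) : l₁.Perm l₂ := by
  obtain ⟨s, hs₁, hfix₁⟩ := hUFP.exists_validSeq_append_fixedPt h₁
  have hs₂ : ValidSeq E O (l₂ ++ s) := validSeq_append.2 ⟨h₂, h ▸ (validSeq_append.1 hs₁).2⟩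
  have hfix₂ : FixedPt E (fireList E O (l₂ ++ s)) := by
    rwa [fireList_append, ← h, ← fireList_append]
  exact (List.perm_append_right_iff s).1
    ((hs₁.subperm_of_fixedPt hs₂ hfix₂).antisymm (hs₂.subperm_of_fixedPt hs₁ hfix₁))

theorem ReachesUFP.firedSet_fireList (hUFP : ReachesUFP E O) (hl : ValidSeq E O l) :
    firedSet E O (fireList E O l) = {v | v ∈ l} := by
  ext v
  constructor
  · rintro ⟨l', hl', h, hv⟩
    exact (hUFP.perm hl' hl h).subset hv
  · exact fun hv => ⟨l, hl, rfl, hv⟩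

theorem ReachesUFP.firedSet_initial (hUFP : ReachesUFP E O) : firedSet E O O = ∅ := by
  simpa [fireList] using hUFP.firedSet_fireList (l := []) trivial

theorem ReachesUFP.firedSet_fire (hUFP : ReachesUFP E O) (hc : Reaches E O c)
    (hv : Firable E c v) : firedSet E O (fire E c v) = insert v (firedSet E O c) := by
  obtain ⟨l, hl, rfl⟩ := hc
  have hlv : ValidSeq E O (l ++ [v]) := validSeq_append.2 ⟨hl, hv, trivial⟩
  have hfire : fireList E O (l ++ [v]) = fire E (fireList E O l) v := fireList_append O l [v]
  rw [← hfire, hUFP.firedSet_fireList hlv, hUFP.firedSet_fireList hl]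
  ext w
  simp [or_comm]

theorem ReachesUFP.firedSet_mono (hUFP : ReachesUFP E O) (hc : Reaches E O c)
    (h : Reaches E c d) : firedSet E O c ⊆ firedSet E O d := by
  obtain ⟨l, hl, rfl⟩ := hc
  obtain ⟨s, hs, rfl⟩ := h
  rw [← fireList_append, hUFP.firedSet_fireList hl,
    hUFP.firedSet_fireList (validSeq_append.2 ⟨hl, hs⟩)]
  exact fun v hv => List.mem_append_left s hv

theorem ReachesUFP.eq_of_fixedPt (hUFP : ReachesUFP E O) (hc : Reaches E O c)
    (hcfix : FixedPt E c) (hd : Reaches E O d) (hdfix : FixedPt E d) : c = d := by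
  obtain ⟨fp, -, -, h⟩ := hUFP
  rw [hcfix.eq_of_reaches (h c hc), hdfix.eq_of_reaches (h d hd)]

theorem ReachesUFP.firedSet_of_fixedPt (hUFP : ReachesUFP E O) (hc : Reaches E O c)
    (hfix : FixedPt E c) : firedSet E O c =
      {v : V | ∃ l : List V, ValidSeq E O l ∧ FixedPt E (fireList E O l) ∧ v ∈ l} := by
  ext v
  constructor
  · rintro ⟨l, hl, rfl, hv⟩
    exact ⟨l, hl, hfix, hv⟩
  · rintro ⟨l, hl, hlfix, hv⟩
    exact ⟨l, hl, hUFP.eq_of_fixedPt ⟨l, hl, rfl⟩ hlfix hc hfix, hv⟩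

end UniqueFixedPoint

section SimpleGames

variable {V : Type*} {E : V → V → ℕ} {O c d : V → ℕ} {v : V} {l : List V}

theorem SimpleCFG.nodup (hSimple : SimpleCFG E O) (hUFP : ReachesUFP E O)
    (hl : ValidSeq E O l) : l.Nodup := by
  obtain ⟨s, hs, hfix⟩ := hUFP.exists_validSeq_append_fixedPt hl
  exact (hSimple (l ++ s) hs hfix).of_append_left

theorem SimpleCFG.notMem_firedSet (hSimple : SimpleCFG E O) (hUFP : ReachesUFP E O)
    (hv : Firable E c v) : v ∉ firedSet E O c := by
  rintro ⟨l, hl, rfl, hvl⟩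
  have hnodup : (l ++ [v]).Nodup :=
    hSimple.nodup hUFP (validSeq_append.2 ⟨hl, hv, trivial⟩)
  exact hnodup.disjoint hvl (List.mem_singleton_self v)

theorem SimpleCFG.firedSet_subset_iff (hSimple : SimpleCFG E O) (hUFP : ReachesUFP E O)
    (hc : Reaches E O c) (hd : Reaches E O d) :
    firedSet E O c ⊆ firedSet E O d ↔ Reaches E c d := by
  refine ⟨fun h => ?_, hUFP.firedSet_mono hc⟩
  obtain ⟨l₁, h₁, rfl⟩ := hc
  obtain ⟨l₂, h₂, rfl⟩ := hd
  rw [hUFP.firedSet_fireList h₁, hUFP.firedSet_fireList h₂] at h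
  exact ⟨l₂.diff l₁, h₂.diff h₁, fireList_diff h₂ h₁ ((hSimple.nodup hUFP h₁).subperm h)⟩

theorem SimpleCFG.exists_firedSet_eq_union (hSimple : SimpleCFG E O) (hUFP : ReachesUFP E O)
    (hc : Reaches E O c) (hd : Reaches E O d) :
    ∃ e, Reaches E O e ∧ firedSet E O e = firedSet E O c ∪ firedSet E O d := by
  obtain ⟨l₁, h₁, rfl⟩ := hc
  obtain ⟨l₂, h₂, rfl⟩ := hd
  have h : ValidSeq E O (l₁ ++ l₂.diff l₁) := validSeq_append.2 ⟨h₁, h₂.diff h₁⟩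
  refine ⟨_, ⟨_, h, rfl⟩, ?_⟩
  rw [hUFP.firedSet_fireList h, hUFP.firedSet_fireList h₁, hUFP.firedSet_fireList h₂]
  ext v
  simp only [List.mem_append, (hSimple.nodup hUFP h₂).mem_sdiff_iff, Set.mem_ofPred_eq,
    Set.mem_union]
  tauto

end SimpleGames

section Antimatroids

theorem covBy_of_map_eq_insert {V L : Type*} [Preorder L] {S : L ↪o Set V} {a c : L} {v : V}
    (hv : v ∉ S a) (hc : S c = insert v (S a)) : a ⋖ c :=
  CovBy.of_image S (hc ▸ Set.covBy_insert hv)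

/-- `S` represents the partial order `L` as an antimatroid of subsets of `V`: the family of all
`S a` contains the empty set, is closed under unions, and is accessible. Accessibility is stated
upwards, inside every interval, rather than by removing elements. -/
structure IsAntimatroidRep {V L : Type*} [PartialOrder L] (S : L ↪o Set V) : Prop where
  exists_map_eq_empty : ∃ a, S a = ∅
  exists_map_eq_union : ∀ a b, ∃ c, S c = S a ∪ S b
  exists_map_eq_insert : ∀ a b, a < b → ∃ v ∉ S a, ∃ c ≤ b, S c = insert v (S a)

/-- The largest element of `L` whose set avoids `v`, as the join of all of them. -/
noncomputable def largestAvoiding {V L : Type*} [Lattice L] [OrderBot L] [Finite L]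
    (S : L ↪o Set V) (v : V) : L :=
  {a | v ∉ S a}.toFinite.toFinset.sup id

namespace IsAntimatroidRep

section PartialOrder

variable {V L : Type*} [PartialOrder L] {S : L ↪o Set V} {a c : L} {v : V}

theorem map_bot [OrderBot L] (hS : IsAntimatroidRep S) : S ⊥ = ∅ := by
  obtain ⟨a, ha⟩ := hS.exists_map_eq_empty
  exact Set.subset_empty_iff.1 (ha ▸ S.monotone bot_le)

theorem exists_map_eq_insert_of_covBy (hS : IsAntimatroidRep S) (h : a ⋖ c) :
    ∃ v ∉ S a, S c = insert v (S a) := by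
  obtain ⟨v, hv, d, hdc, hd⟩ := hS.exists_map_eq_insert a c h.lt
  have had : a ⋖ d := covBy_of_map_eq_insert hv hd
  obtain rfl : d = c := (h.eq_or_eq had.le hdc).resolve_left had.ne'
  exact ⟨v, hv, hd⟩

end PartialOrder

variable {V L : Type*} [Lattice L] {S : L ↪o Set V} {a c m : L} {v : V}

theorem map_sup (hS : IsAntimatroidRep S) (a b : L) : S (a ⊔ b) = S a ∪ S b := by
  obtain ⟨c, hc⟩ := hS.exists_map_eq_union a b
  have hac : a ≤ c := S.le_iff_le.1 (hc ▸ Set.subset_union_left)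
  have hbc : b ≤ c := S.le_iff_le.1 (hc ▸ Set.subset_union_right)
  refine Set.Subset.antisymm ?_ (Set.union_subset (S.monotone le_sup_left)
    (S.monotone le_sup_right))
  exact hc ▸ S.monotone (sup_le hac hbc)

section OrderBot

variable [OrderBot L] [Finite L]

theorem notMem_largestAvoiding (hS : IsAntimatroidRep S) (v : V) :
    v ∉ S (largestAvoiding S v) := by
  unfold largestAvoiding
  refine Finset.sup_induction (p := fun a => v ∉ S a) (by simp [hS.map_bot]) ?_ (by simp)
  intro a ha b hb
  simp [hS.map_sup, ha, hb]

theorem le_largestAvoiding_iff (hS : IsAntimatroidRep S) :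
    a ≤ largestAvoiding S v ↔ v ∉ S a :=
  ⟨fun h hv => hS.notMem_largestAvoiding v (S.monotone h hv),
    fun h => Finset.le_sup (f := id) (by simpa using h)⟩

theorem mem_of_largestAvoiding_lt (hS : IsAntimatroidRep S) (h : largestAvoiding S v < a) :
    v ∈ S a :=
  not_not.1 (mt hS.le_largestAvoiding_iff.2 h.not_ge)

end OrderBot

variable [BoundedOrder L] [Finite L]

theorem exists_map_eq_insert_largestAvoiding (hS : IsAntimatroidRep S) (hv : v ∈ S ⊤) :
    ∃ c, S c = insert v (S (largestAvoiding S v)) := by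
  have hlt : largestAvoiding S v < ⊤ :=
    lt_top_iff_ne_top.2 fun h => hS.notMem_largestAvoiding v (h ▸ hv)
  obtain ⟨w, hw, c, -, hc⟩ := hS.exists_map_eq_insert _ _ hlt
  have hvc : v ∈ S c := hS.mem_of_largestAvoiding_lt (covBy_of_map_eq_insert hw hc).lt
  obtain rfl : v = w := (hc ▸ hvc).resolve_right (hS.notMem_largestAvoiding v)
  exact ⟨c, hc⟩

theorem meetIrred_largestAvoiding (hS : IsAntimatroidRep S) (hv : v ∈ S ⊤) :
    MeetIrred (largestAvoiding S v) := by
  obtain ⟨c, hc⟩ := hS.exists_map_eq_insert_largestAvoiding hv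
  have hcov := covBy_of_map_eq_insert (hS.notMem_largestAvoiding v) hc
  refine ⟨c, hcov, fun d hd => ?_⟩
  have hcd : c ≤ d := S.le_iff_le.1 <|
    hc ▸ Set.insert_subset (hS.mem_of_largestAvoiding_lt hd.lt) (S.monotone hd.le)
  exact ((hd.eq_or_eq hcov.le hcd).resolve_left hcov.ne').symm

theorem injOn_largestAvoiding (hS : IsAntimatroidRep S) :
    Set.InjOn (largestAvoiding S) (S ⊤) := by
  intro v hv w _ h
  obtain ⟨c, hc⟩ := hS.exists_map_eq_insert_largestAvoiding hv
  have hcov := covBy_of_map_eq_insert (hS.notMem_largestAvoiding v) hc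
  have hwc : w ∈ S c := hS.mem_of_largestAvoiding_lt (h ▸ hcov.lt)
  rw [hc, h] at hwc
  exact (hwc.resolve_right (hS.notMem_largestAvoiding w)).symm

theorem exists_eq_largestAvoiding (hS : IsAntimatroidRep S) (hm : MeetIrred m) :
    ∃ v ∈ S ⊤, largestAvoiding S v = m := by
  obtain ⟨c, hmc, hunique⟩ := hm
  obtain ⟨v, hv, hc⟩ := hS.exists_map_eq_insert_of_covBy hmc
  have hvc : v ∈ S c := hc ▸ Set.mem_insert v _
  have hm_le : m ≤ largestAvoiding S v := hS.le_largestAvoiding_iff.2 hv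
  refine ⟨v, S.monotone le_top hvc, (hm_le.eq_of_not_lt fun hlt => ?_).symm⟩
  obtain ⟨w, hw, d, hd, hdw⟩ := hS.exists_map_eq_insert _ _ hlt
  obtain rfl := hunique d (covBy_of_map_eq_insert hw hdw)
  exact hS.le_largestAvoiding_iff.1 hd hvc

theorem msetDiff_eq_singleton (hS : IsAntimatroidRep S) (hv : v ∉ S a)
    (hc : S c = insert v (S a)) : MsetDiff a c = {largestAvoiding S v} := by
  have hvc : v ∈ S c := hc ▸ Set.mem_insert v _
  refine Set.eq_singleton_iff_unique_mem.2 ⟨⟨?_, ?_, ?_⟩, ?_⟩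
  · exact hS.meetIrred_largestAvoiding (S.monotone le_top hvc)
  · exact hS.le_largestAvoiding_iff.2 hv
  · exact fun h => hS.le_largestAvoiding_iff.1 h hvc
  · rintro m ⟨hm, ham, hcm⟩
    obtain ⟨w, -, rfl⟩ := hS.exists_eq_largestAvoiding hm
    rw [hS.le_largestAvoiding_iff] at ham
    rw [hS.le_largestAvoiding_iff, not_not, hc] at hcm
    rw [hcm.resolve_right ham]

/-- The bijection from the ground set `S ⊤` of the antimatroid onto the meet-irreducibles. -/
noncomputable def meetIrredEquiv (hS : IsAntimatroidRep S) : S ⊤ ≃ {m : L // MeetIrred m} :=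
  Equiv.ofBijective (fun v => ⟨largestAvoiding S v, hS.meetIrred_largestAvoiding v.2⟩)
    ⟨fun v w h => Subtype.ext (hS.injOn_largestAvoiding v.2 w.2 (congrArg Subtype.val h)),
      fun ⟨_, hm⟩ =>
        let ⟨v, hv, h⟩ := hS.exists_eq_largestAvoiding hm
        ⟨⟨v, hv⟩, Subtype.ext h⟩⟩

theorem meetIrredEquiv_symm_eq (hS : IsAntimatroidRep S) {m : {m : L // MeetIrred m}}
    (hv : v ∉ S a) (hc : S c = insert v (S a)) (hm : MsetDiff a c = {m.val}) :
    (hS.meetIrredEquiv.symm m : V) = v := by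
  have hvtop : v ∈ S ⊤ := S.monotone le_top (hc ▸ Set.mem_insert v _)
  have hmv : m.val = largestAvoiding S v :=
    Set.singleton_injective (hm.symm.trans (hS.msetDiff_eq_singleton hv hc))
  have h : m = hS.meetIrredEquiv ⟨v, hvtop⟩ := Subtype.ext hmv
  rw [h, Equiv.symm_apply_apply]

end IsAntimatroidRep

end Antimatroids

section ConfigurationSpace

variable {V : Type*} {E : V → V → ℕ} {O : V → ℕ} {L : Type*} [PartialOrder L]
  {f : L ≃ {c : V → ℕ // Reaches E O c}}

/-- In a simple game, the order embedding of the configuration space into the subsets of `V` that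
sends a configuration to the set of vertices fired to reach it. -/
def firedSetEmbedding (hSimple : SimpleCFG E O) (hUFP : ReachesUFP E O)
    (hf : ∀ a b : L, a ≤ b ↔ Reaches E (f a).val (f b).val) : L ↪o Set V :=
  OrderEmbedding.ofMapLEIff (fun a => firedSet E O (f a).val) fun a b =>
    (hSimple.firedSet_subset_iff hUFP (f a).2 (f b).2).trans (hf a b).symm

theorem isAntimatroidRep_firedSetEmbedding (hSimple : SimpleCFG E O) (hUFP : ReachesUFP E O)
    (hf : ∀ a b : L, a ≤ b ↔ Reaches E (f a).val (f b).val) :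
    IsAntimatroidRep (firedSetEmbedding hSimple hUFP hf) where
  exists_map_eq_empty :=
    ⟨f.symm ⟨O, [], trivial, rfl⟩, by simp [firedSetEmbedding, hUFP.firedSet_initial]⟩
  exists_map_eq_union a b := by
    obtain ⟨e, he, heq⟩ := hSimple.exists_firedSet_eq_union hUFP (f a).2 (f b).2
    exact ⟨f.symm ⟨e, he⟩, by simpa [firedSetEmbedding] using heq⟩
  exists_map_eq_insert a b hab := by
    obtain ⟨s, hs, hsb⟩ := (hf a b).1 hab.le
    cases s with
    | nil => exact absurd (f.injective (Subtype.ext hsb)) hab.ne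
    | cons v s =>
      refine ⟨v, hSimple.notMem_firedSet hUFP hs.1, f.symm ⟨_, (f a).2.fire hs.1⟩, ?_, ?_⟩
      · rw [hf, Equiv.apply_symm_apply]
        exact ⟨s, hs.2, hsb⟩
      · simpa [firedSetEmbedding] using hUFP.firedSet_fire (f a).2 hs.1

theorem ReachesUFP.fixedPt_top [OrderTop L] (hUFP : ReachesUFP E O)
    (hf : ∀ a b : L, a ≤ b ↔ Reaches E (f a).val (f b).val) : FixedPt E (f ⊤).val := by
  obtain ⟨fp, hfp, hfix, -⟩ := hUFP
  have h : fp = (f ⊤).val := hfix.eq_of_reaches <| by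
    simpa using (hf (f.symm ⟨fp, hfp⟩) ⊤).1 le_top
  exact h ▸ hfix

end ConfigurationSpace

-- On an infinite graph `outDeg` is the true out-degree only at vertices with finitely many
-- out-neighbours: elsewhere `finsum` returns `0`.
theorem stmt1_general {V : Type*} (E : V → V → ℕ) (_hE : ∀ v, (Function.support (E v)).Finite)
    (O : V → ℕ) (hUFP : ReachesUFP E O) (hSimple : SimpleCFG E O)
    {L : Type*} [Lattice L] [Finite L] [BoundedOrder L]
    (f : L ≃ {c : V → ℕ // Reaches E O c})
    (hf : ∀ a b : L, a ≤ b ↔ Reaches E (f a).val (f b).val) :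
    ∃ κ : {m : L // MeetIrred m} → V,
      (∀ (m : {m : L // MeetIrred m}) (c c' : L) (v : V),
        c ⋖ c' → MsetDiff c c' = {m.val} → FireStep E (f c).val v (f c').val →
        κ m = v) ∧
      Function.Injective κ ∧
      Set.range κ =
        {v : V | ∃ l : List V, ValidSeq E O l ∧ FixedPt E (fireList E O l) ∧ v ∈ l} := by
  have hS := isAntimatroidRep_firedSetEmbedding hSimple hUFP hf
  let e := hS.meetIrredEquiv
  refine ⟨Subtype.val ∘ e.symm, fun m c c' v _ hm ⟨hv, hc'⟩ => ?_,
    Subtype.val_injective.comp e.symm.injective, ?_⟩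
  · have hinsert : firedSet E O (f c').val = insert v (firedSet E O (f c).val) :=
      hc' ▸ hUFP.firedSet_fire (f c).2 hv
    exact hS.meetIrredEquiv_symm_eq (hSimple.notMem_firedSet hUFP hv) hinsert hm
  · rw [e.symm.surjective.range_comp, Subtype.range_coe]
    exact hUFP.firedSet_of_fixedPt (f ⊤).2 (hUFP.fixedPt_top hf)

/-- for a simple CFG reaching a unique fixed point generating the finite
ULD lattice `L`, the map `κ` sending a meet-irreducible `m` to the vertex fired in any
cover `c ⋖ c'` with `𝔪(c,c') = m` is well-defined and is a bijection from the
meet-irreducibles onto the set `𝒱` of fired vertices. -/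
theorem stmt1 {V : Type*} [Finite V] (E : V → V → ℕ) (O : V → ℕ)
    (hUFP : ReachesUFP E O) (hSimple : SimpleCFG E O)
    {L : Type*} [Lattice L] [Fintype L] [BoundedOrder L] (hULD : IsULD L)
    (f : L ≃ {c : V → ℕ // Reaches E O c})
    (hf : ∀ a b : L, a ≤ b ↔ Reaches E (f a).val (f b).val) :
    ∃ κ : {m : L // MeetIrred m} → V,
      (∀ (m : {m : L // MeetIrred m}) (c c' : L) (v : V),
        c ⋖ c' → MsetDiff c c' = {m.val} → FireStep E (f c).val v (f c').val →
        κ m = v) ∧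
      Function.Injective κ ∧
      Set.range κ =
        {v : V | ∃ l : List V, ValidSeq E O l ∧ FixedPt E (fireList E O l) ∧ v ∈ l} :=
  stmt1_general E (fun _ => Set.toFinite _) O hUFP hSimple f hf
end

section
/- Let L be a finite ULD lattice and m a meet-irreducible of L. Then 𝔘_m = {j⁻ : j is a join-irreducible of L and j is a minimal element of {x ∈ L : x ≰ m}}. -/
open Classical

/-!
Say that `m` separates `x ⋖ y` if `x ≤ m` and `y ≰ m`. In a ULD lattice each cover is separated by
a unique meet-irreducible. For uniqueness, induct downwards on `x`: a meet-irreducible `x` is itself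
the only separator; otherwise, if `m` and `n` both separate the cover, step from `x` to atoms
`a ≤ m` and `b ≤ n` of `[x, x⁺]`; distributivity of this interval gives `y ≰ a ⊔ b`, so some
meet-irreducible `k ≥ a ⊔ b` separates the cover too, and the covers `a ⋖ a ⊔ y` and `b ⋖ b ⊔ y`
force `m = k = n`.

Hence `𝔪(x, y) = m` just says that `m` separates `x ⋖ y`. An element `j` minimal with `j ≰ m` has
`j ⊓ m` as its only lower cover, and the covers `j ⊓ m ⋖ j` are the lowest ones separated by `m`.
-/

section Irreducibles

variable {L : Type*} [Lattice L] {x y z w m j : L}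

theorem inf_covBy_of_minimal_not_le (hj : Minimal (fun w => ¬ w ≤ m) j) : j ⊓ m ⋖ j :=
  ⟨inf_lt_left.2 hj.1, fun _ hw hwj =>
    hw.not_ge (le_inf hwj.le (not_not.1 (hj.not_prop_of_lt hwj)))⟩

theorem eq_inf_of_covBy_of_minimal_not_le (hj : Minimal (fun w => ¬ w ≤ m) j) (hx : x ⋖ j) :
    x = j ⊓ m := by
  have hxm : x ≤ m := not_not.1 (hj.not_prop_of_lt hx.lt)
  exact ((hx.eq_or_eq (le_inf hx.le hxm) inf_le_left).resolve_right
    (inf_covBy_of_minimal_not_le hj).ne).symm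

theorem joinIrred_of_minimal_not_le (hj : Minimal (fun w => ¬ w ≤ m) j) : JoinIrred j :=
  ⟨j ⊓ m, inf_covBy_of_minimal_not_le hj, fun _ => eq_inf_of_covBy_of_minimal_not_le hj⟩

theorem meetIrred_of_maximal_not_le (hm : Maximal (fun w => ¬ y ≤ w) m) : MeetIrred m := by
  have sup_le_of_lt : ∀ w, m < w → m ⊔ y ≤ w := fun w hw =>
    sup_le hw.le (not_not.1 (hm.not_prop_of_gt hw))
  have lt_sup : m < m ⊔ y := left_lt_sup.2 hm.1
  refine ⟨m ⊔ y, ⟨lt_sup, fun w hw hwy => hwy.not_ge (sup_le_of_lt w hw)⟩, fun w hw => ?_⟩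
  exact ((hw.eq_or_eq lt_sup.le (sup_le_of_lt w hw.lt)).resolve_left lt_sup.ne').symm

theorem MeetIrred.msetDiff_eq_singleton [IsStronglyAtomic L] (hm : MeetIrred m) (hy : m ⋖ y) :
    MsetDiff m y = {m} := by
  refine Set.eq_singleton_iff_unique_mem.2 ⟨⟨hm, le_rfl, hy.lt.not_ge⟩, fun n hn => ?_⟩
  by_contra hne
  obtain ⟨c, hc, hcn⟩ := exists_covBy_le_of_lt (lt_of_le_of_ne' hn.2.1 hne)
  exact hn.2.2 (hm.unique hy hc ▸ hcn)

theorem mem_msetDiff_sup (hm : m ∈ MsetDiff x y) (hzm : z ≤ m) : m ∈ MsetDiff z (z ⊔ y) :=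
  ⟨hm.1, hzm, fun h => hm.2.2 (le_sup_right.trans h)⟩

theorem msetDiff_nonempty_of_not_le [WellFoundedGT L] (h : ¬ y ≤ x) : (MsetDiff x y).Nonempty := by
  obtain ⟨m, hxm, hm⟩ := exists_maximal_ge_of_wellFoundedGT (fun w => ¬ y ≤ w) x h
  exact ⟨m, meetIrred_of_maximal_not_le hm, hxm, hm.1⟩

theorem le_of_msetDiff_eq_singleton [WellFoundedGT L] (h : MsetDiff x y = {m}) (hxw : x ≤ w)
    (hwm : ¬ w ≤ m) : y ≤ w := by
  by_contra hyw
  obtain ⟨k, hk, hwk, hyk⟩ := msetDiff_nonempty_of_not_le hyw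
  have hkm : k ∈ MsetDiff x y := ⟨hk, hxw.trans hwk, hyk⟩
  obtain rfl : k = m := by rwa [h] at hkm
  exact hwm hwk

theorem exists_minimal_not_le_inf_le_of_covBy [WellFoundedLT L] (hxy : x ⋖ y) (hxm : x ≤ m)
    (hym : ¬ y ≤ m) : ∃ j, Minimal (fun w => ¬ w ≤ m) j ∧ j ⊓ m ≤ x := by
  obtain ⟨j, hjy, hj⟩ := exists_minimal_le_of_wellFoundedLT (fun w => ¬ w ≤ m) y hym
  have hyx : y ⊓ m = x :=
    (hxy.eq_or_eq (le_inf hxy.le hxm) inf_le_left).resolve_right (inf_lt_left.2 hym).ne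
  exact ⟨j, hj, hyx ▸ inf_le_inf_right m hjy⟩

end Irreducibles

section UpperLocallyDistributive

variable {L : Type*} [Lattice L] [Fintype L]

theorem mem_Icc_uplus_of_covBy [OrderBot L] {x y : L} (h : x ⋖ y) :
    y ∈ Set.Icc x (uplus x) := by
  have hle := Finset.le_sup (f := fun z => if x ⋖ z then z else ⊥) (Finset.mem_univ y)
  rw [if_pos h] at hle
  exact ⟨h.le, hle⟩

namespace IsULD

variable [BoundedOrder L] {x y u v w a b m : L}

theorem inf_sup_left (hULD : IsULD L) (hx : x ≠ ⊤) (hu : u ∈ Set.Icc x (uplus x))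
    (hv : v ∈ Set.Icc x (uplus x)) (hw : w ∈ Set.Icc x (uplus x)) :
    u ⊓ (v ⊔ w) = u ⊓ v ⊔ u ⊓ w := by
  obtain ⟨n, ⟨f⟩⟩ := hULD x hx
  let u' : Set.Icc x (uplus x) := ⟨u, hu⟩
  let v' : Set.Icc x (uplus x) := ⟨v, hv⟩
  let w' : Set.Icc x (uplus x) := ⟨w, hw⟩
  have hdistrib : u' ⊓ (v' ⊔ w') = u' ⊓ v' ⊔ u' ⊓ w' :=
    f.injective (by simp only [map_inf, map_sup, _root_.inf_sup_left])
  exact congrArg Subtype.val hdistrib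

theorem isWeakUpperModularLattice_s5 (hULD : IsULD L) : IsWeakUpperModularLattice L where
  covBy_sup_of_inf_covBy_covBy {a b} ha hb := by
    refine ⟨left_lt_sup.2 (inf_lt_right.1 hb.lt), fun z haz hz => ?_⟩
    have ha' := mem_Icc_uplus_of_covBy ha
    have hb' := mem_Icc_uplus_of_covBy hb
    have hz' : z ∈ Set.Icc (a ⊓ b) (uplus (a ⊓ b)) :=
      ⟨ha.le.trans haz.le, hz.le.trans (sup_le ha'.2 hb'.2)⟩
    have hsplit : z = a ⊔ z ⊓ b :=
      calc z = z ⊓ (a ⊔ b) := (inf_eq_left.2 hz.le).symm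
        _ = z ⊓ a ⊔ z ⊓ b := hULD.inf_sup_left ha.lt.ne_top hz' ha' hb'
        _ = a ⊔ z ⊓ b := by rw [inf_eq_right.2 haz.le]
    rcases hb.eq_or_eq (le_inf hz'.1 hb.le) inf_le_right with hinf | hinf
    · rw [hinf, sup_inf_self] at hsplit
      exact haz.ne' hsplit
    · rw [hinf] at hsplit
      exact hz.ne hsplit

theorem covBy_sup (hULD : IsULD L) (ha : x ⋖ a) (hb : x ⋖ b) (hab : a ≠ b) : a ⋖ a ⊔ b := by
  have := hULD.isWeakUpperModularLattice_s5
  have hinf : a ⊓ b = x := ha.wcovBy.inf_eq hb.wcovBy hab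
  exact covBy_sup_of_inf_covBy_of_inf_covBy_left (hinf.symm ▸ ha) (hinf.symm ▸ hb)

theorem not_le_sup_of_covBy (hULD : IsULD L) (hy : x ⋖ y) (ha : x ⋖ a) (hb : x ⋖ b)
    (hya : y ≠ a) (hyb : y ≠ b) : ¬ y ≤ a ⊔ b := by
  intro hle
  refine hy.ne ?_
  calc x = y ⊓ a ⊔ y ⊓ b := by
        rw [hy.wcovBy.inf_eq ha.wcovBy hya, hy.wcovBy.inf_eq hb.wcovBy hyb, sup_idem]
    _ = y ⊓ (a ⊔ b) := (hULD.inf_sup_left hy.lt.ne_top (mem_Icc_uplus_of_covBy hy)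
        (mem_Icc_uplus_of_covBy ha) (mem_Icc_uplus_of_covBy hb)).symm
    _ = y := inf_eq_left.2 hle

theorem subsingleton_msetDiff (hULD : IsULD L) (hxy : x ⋖ y) : (MsetDiff x y).Subsingleton := by
  induction x using WellFoundedGT.induction generalizing y with
  | ind x ih =>
    by_cases hx : MeetIrred x
    · rw [hx.msetDiff_eq_singleton hxy]
      exact Set.subsingleton_singleton
    intro m hm n hn
    have exists_covBy_le : ∀ k ∈ MsetDiff x y, ∃ c, x ⋖ c ∧ c ≤ k ∧ y ≠ c := by
      intro k hk
      have hxk : x < k := lt_of_le_of_ne hk.2.1 fun h => hx (h ▸ hk.1)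
      obtain ⟨c, hxc, hck⟩ := exists_covBy_le_of_lt hxk
      exact ⟨c, hxc, hck, fun h => hk.2.2 (h ▸ hck)⟩
    obtain ⟨a, hxa, ham, hya⟩ := exists_covBy_le m hm
    obtain ⟨b, hxb, hbn, hyb⟩ := exists_covBy_le n hn
    obtain ⟨k, hk, habk, hyk⟩ :=
      msetDiff_nonempty_of_not_le (hULD.not_le_sup_of_covBy hxy hxa hxb hya hyb)
    have hak : a ≤ k := le_sup_left.trans habk
    have hbk : b ≤ k := le_sup_right.trans habk
    have hkxy : k ∈ MsetDiff x y := ⟨hk, hxa.le.trans hak, hyk⟩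
    have hmk : m = k := ih a hxa.lt (hULD.covBy_sup hxa hxy hya.symm)
      (mem_msetDiff_sup hm ham) (mem_msetDiff_sup hkxy hak)
    have hnk : n = k := ih b hxb.lt (hULD.covBy_sup hxb hxy hyb.symm)
      (mem_msetDiff_sup hn hbn) (mem_msetDiff_sup hkxy hbk)
    exact hmk.trans hnk.symm

theorem msetDiff_eq_singleton_iff (hULD : IsULD L) (hm : MeetIrred m) (hxy : x ⋖ y) :
    MsetDiff x y = {m} ↔ x ≤ m ∧ ¬ y ≤ m := by
  refine ⟨fun h => ?_, fun h => (hULD.subsingleton_msetDiff hxy).eq_singleton_of_mem ⟨hm, h⟩⟩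
  have hmem : m ∈ MsetDiff x y := h ▸ Set.mem_singleton m
  exact hmem.2

end IsULD

end UpperLocallyDistributive

/-- in a finite ULD lattice, for every meet-irreducible `m`,
`𝔘_m = {j⁻ : j join-irreducible and j minimal in {x : x ≰ m}}`. -/
theorem stmt5 {L : Type*} [Lattice L] [Fintype L] [BoundedOrder L]
    (hULD : IsULD L) (m : L) (hm : MeetIrred m) :
    Uset m = {x : L | ∃ j : L, JoinIrred j ∧ Minimal (fun z => ¬ z ≤ m) j ∧ x ⋖ j} := by
  ext x
  constructor
  · rintro ⟨⟨y, hxy, hdiff⟩, hmin⟩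
    obtain ⟨hxm, hym⟩ := (hULD.msetDiff_eq_singleton_iff hm hxy).1 hdiff
    obtain ⟨j, hj, hjx⟩ := exists_minimal_not_le_inf_le_of_covBy hxy hxm hym
    have hcov : j ⊓ m ⋖ j := inf_covBy_of_minimal_not_le hj
    have hsep := (hULD.msetDiff_eq_singleton_iff hm hcov).2 ⟨inf_le_right, hj.1⟩
    obtain rfl : x = j ⊓ m := le_antisymm (hmin ⟨j, hcov, hsep⟩ hjx) hjx
    exact ⟨j, joinIrred_of_minimal_not_le hj, hj, hcov⟩
  · rintro ⟨j, -, hj, hxj⟩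
    have hxm : x ≤ m := eq_inf_of_covBy_of_minimal_not_le hj hxj ▸ inf_le_right
    refine ⟨⟨j, hxj, (hULD.msetDiff_eq_singleton_iff hm hxj).2 ⟨hxm, hj.1⟩⟩, ?_⟩
    rintro z ⟨y, hzy, hdiff⟩ hzx
    have hyj : y ≤ j := le_of_msetDiff_eq_singleton hdiff (hzx.trans hxj.le) hj.1
    have hym : ¬ y ≤ m := ((hULD.msetDiff_eq_singleton_iff hm hzy).1 hdiff).2
    obtain rfl : y = j := hj.eq_of_le hym hyj
    exact ((hzy.eq_or_eq hzx hxj.le).resolve_right hxj.ne).le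
end

section
/- If L is a finite distributive lattice, then for every meet-irreducible m of L the set 𝔘_m has exactly one element. -/
open Classical

/-! In a distributive lattice a meet-irreducible `m` is prime, so `{y | ¬ y ≤ m}` is closed under
`⊓` and, by well-foundedness, has a least element `j`. A cover `x ⋖ y` with `𝔪(x,y) = m` satisfies
`x = m ⊓ y ≥ m ⊓ j`, and `m ⊓ j ⋖ j` is itself such a cover, so `𝔘_m = {m ⊓ j}`. -/

theorem MeetIrred.infIrred {L : Type*} [Lattice L] [IsStronglyAtomic L] {m : L}
    (hm : MeetIrred m) : InfIrred m := by
  obtain ⟨c, hmc, hc_unique⟩ := hm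
  have hc_le : ∀ x, m < x → c ≤ x := fun x hmx =>
    let ⟨_, hmd, hdx⟩ := exists_covBy_le_of_lt hmx
    hc_unique _ hmd ▸ hdx
  refine ⟨hmc.lt.not_isMax, fun a b hab => ?_⟩
  by_contra! hne
  have hma : m < a := lt_of_le_of_ne (hab ▸ inf_le_left) hne.1.symm
  have hmb : m < b := lt_of_le_of_ne (hab ▸ inf_le_right) hne.2.symm
  exact hmc.lt.not_ge (hab ▸ le_inf (hc_le a hma) (hc_le b hmb))

section SemilatticeInf

variable {L : Type*} [SemilatticeInf L] {m x y j : L}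

theorem exists_isLeast_not_le_of_infPrime [WellFoundedLT L] (hm : InfPrime m) :
    ∃ j, IsLeast {y | ¬ y ≤ m} j := by
  obtain ⟨y, hy⟩ := not_isMax_iff.1 hm.1
  obtain ⟨j, hj⟩ := exists_minimal_of_wellFoundedLT (fun y => ¬ y ≤ m) ⟨y, hy.not_ge⟩
  refine ⟨j, hj.prop, fun z hz => ?_⟩
  have hjz : ¬ j ⊓ z ≤ m := fun h => (hm.2 h).elim hj.prop hz
  exact (hj.le_of_le hjz inf_le_left).trans inf_le_right

theorem inf_covBy_of_isLeast_not_le (hj : IsLeast {y | ¬ y ≤ m} j) : m ⊓ j ⋖ j := by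
  refine ⟨inf_lt_right.2 hj.1, fun w hw hwj => ?_⟩
  have hwm : w ≤ m := not_not.1 fun h => hwj.not_ge (hj.2 h)
  exact hw.not_ge (le_inf hwm hwj.le)

theorem inf_eq_of_covBy_of_le_of_not_le (hxy : x ⋖ y) (hxm : x ≤ m) (hym : ¬ y ≤ m) : m ⊓ y = x :=
  (hxy.eq_or_eq (le_inf hxm hxy.le) inf_le_right).resolve_right fun h => hym (inf_eq_right.1 h)

end SemilatticeInf

section DistribLattice

variable {L : Type*} [DistribLattice L] {m j : L}

theorem msetDiff_inf_eq_singleton_of_isLeast [IsStronglyAtomic L] (hm : MeetIrred m)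
    (hj : IsLeast {y | ¬ y ≤ m} j) : MsetDiff (m ⊓ j) j = {m} := by
  refine Set.eq_singleton_iff_unique_mem.2 ⟨⟨hm, inf_le_left, hj.1⟩, ?_⟩
  rintro p ⟨hp, hmjp, hjp⟩
  have hmp : m ≤ p := (hp.infIrred.infPrime.2 hmjp).resolve_right hjp
  have hpm : p ≤ m := not_not.1 fun h => hjp (hj.2 h)
  exact hpm.antisymm hmp

theorem uset_eq_singleton_of_isLeast [IsStronglyAtomic L] (hm : MeetIrred m)
    (hj : IsLeast {y | ¬ y ≤ m} j) : Uset m = {m ⊓ j} := by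
  have hleast : IsLeast {x | ∃ y, x ⋖ y ∧ MsetDiff x y = {m}} (m ⊓ j) := by
    refine ⟨⟨j, inf_covBy_of_isLeast_not_le hj, msetDiff_inf_eq_singleton_of_isLeast hm hj⟩, ?_⟩
    rintro x ⟨y, hxy, hdiff⟩
    obtain ⟨-, hxm, hym⟩ : m ∈ MsetDiff x y := hdiff ▸ Set.mem_singleton m
    calc m ⊓ j ≤ m ⊓ y := inf_le_inf_left m (hj.2 hym)
      _ = x := inf_eq_of_covBy_of_le_of_not_le hxy hxm hym
  exact Set.ext fun _ => hleast.minimal_iff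

end DistribLattice

theorem stmt6_general {L : Type*} [DistribLattice L] [WellFoundedLT L] (m : L)
    (hm : MeetIrred m) : ∃! x : L, x ∈ Uset m := by
  obtain ⟨j, hj⟩ := exists_isLeast_not_le_of_infPrime hm.infIrred.infPrime
  exact ⟨m ⊓ j, by simp [uset_eq_singleton_of_isLeast hm hj]⟩

/-- in a finite distributive lattice, for every meet-irreducible `m`
the set `𝔘_m` has exactly one element. -/
theorem stmt6 {L : Type*} [DistribLattice L] [Fintype L] [BoundedOrder L]
    (m : L) (hm : MeetIrred m) :
    ∃! x : L, x ∈ Uset m :=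
  stmt6_general m hm
end
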